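/- The element x is ad-locally nilpotent in D: for every a ∈ D there exists n ∈ ℕ such that (ad x)^n(a) = 0, where ad x(b) = xb − bx. -/

import Mathlib

open FreeAlgebra

/-- Generators of the double of the Jordan plane. -/
inductive JGen : Type
  | u | v | zeta | g | ginv | x | y

variable (k : Type) [Field k] [IsAlgClosed k] [CharZero k]

/-- The defining relations of the double of the Jordan plane. -/
inductive JRel : FreeAlgebra k JGen → FreeAlgebra k JGen → Prop
  | gginv : JRel (ι k .g * ι k .ginv) 1
  | ginvg : JRel (ι k .ginv * ι k .g) 1
  | zg : JRel (ι k .zeta * ι k .g) (ι k .g * ι k .zeta)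
  | gx : JRel (ι k .g * ι k .x) (ι k .x * ι k .g)
  | gy : JRel (ι k .g * ι k .y) (ι k .y * ι k .g + ι k .x * ι k .g)
  | zy : JRel (ι k .zeta * ι k .y) (ι k .y * ι k .zeta + ι k .y)
  | zx : JRel (ι k .zeta * ι k .x) (ι k .x * ι k .zeta + ι k .x)
  | ug : JRel (ι k .u * ι k .g) (ι k .g * ι k .u)
  | vg : JRel (ι k .v * ι k .g) (ι k .g * ι k .v + ι k .g * ι k .u)
  | vz : JRel (ι k .v * ι k .zeta) (ι k .zeta * ι k .v + ι k .v)
  | uz : JRel (ι k .u * ι k .zeta) (ι k .zeta * ι k .u + ι k .u)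
  | yx : JRel (ι k .y * ι k .x) (ι k .x * ι k .y - (1/2 : k) • (ι k .x * ι k .x))
  | vu : JRel (ι k .v * ι k .u) (ι k .u * ι k .v - (1/2 : k) • (ι k .u * ι k .u))
  | ux : JRel (ι k .u * ι k .x) (ι k .x * ι k .u)
  | vx : JRel (ι k .v * ι k .x) (ι k .x * ι k .v + (1 - ι k .g) + ι k .x * ι k .u)
  | uy : JRel (ι k .u * ι k .y) (ι k .y * ι k .u + (1 - ι k .g))
  | vy : JRel (ι k .v * ι k .y) (ι k .y * ι k .v - ι k .g * ι k .zeta + ι k .y * ι k .u)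

/-- The double of the Jordan plane, as the presented algebra. -/
def D : Type := RingQuot (JRel k)

noncomputable instance : Ring (D k) := inferInstanceAs (Ring (RingQuot (JRel k)))
noncomputable instance : Algebra k (D k) := inferInstanceAs (Algebra k (RingQuot (JRel k)))

/-- The canonical projection from the free algebra onto `D`. -/
noncomputable def Dmk : FreeAlgebra k JGen →ₐ[k] D k := RingQuot.mkAlgHom k (JRel k)

noncomputable def DU : D k := Dmk k (ι k .u)
noncomputable def DV : D k := Dmk k (ι k .v)
noncomputable def DZ : D k := Dmk k (ι k .zeta)
noncomputable def DG : D k := Dmk k (ι k .g)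
noncomputable def DGinv : D k := Dmk k (ι k .ginv)
noncomputable def DX : D k := Dmk k (ι k .x)
noncomputable def DY : D k := Dmk k (ι k .y)

set_option synthInstance.maxHeartbeats 1000000
set_option maxHeartbeats 2000000

/-!
Elements annihilated by some power of a derivation form a subalgebra, by the iterated Leibniz rule.
For the derivation `ad x` this subalgebra contains every generator of `D`: `x`, `u`, `g`, `g⁻¹`
commute with `x`, while `[x, ζ]`, `[x, y]`, `[x, v]` are polynomials in `x`, `u`, `g`.
-/

open Finset LieAlgebra

attribute [local instance] LieRing.ofAssociativeRing

section Leibniz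

variable {R A : Type*} [Semiring R] [NonUnitalNonAssocSemiring A] [Module R A]
  {δ : Module.End R A}

theorem pow_apply_mul_of_leibniz (hδ : ∀ a b, δ (a * b) = δ a * b + a * δ b) (n : ℕ) (a b : A) :
    (δ ^ n) (a * b) =
      ∑ ij ∈ antidiagonal n, n.choose ij.1 • ((δ ^ ij.1) a * (δ ^ ij.2) b) := by
  induction n with
  | zero => simp
  | succ n ih =>
    rw [sum_antidiagonal_choose_succ_nsmul (fun i j => (δ ^ i) a * (δ ^ j) b) n, pow_succ',
      Module.End.mul_apply, ih]
    simp only [map_sum, map_nsmul, hδ, nsmul_add, sum_add_distrib, pow_succ', Module.End.mul_apply]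
    rw [add_comm]
    congr 1
    refine sum_congr rfl fun ij hij => ?_
    rw [n.choose_symm_of_eq_add (HasAntidiagonal.mem_antidiagonal.1 hij).symm]

theorem pow_add_apply_mul_eq_zero_of_leibniz (hδ : ∀ a b, δ (a * b) = δ a * b + a * δ b)
    {m n : ℕ} {a b : A} (ha : (δ ^ m) a = 0) (hb : (δ ^ n) b = 0) : (δ ^ (m + n)) (a * b) = 0 := by
  rw [pow_apply_mul_of_leibniz hδ]
  refine sum_eq_zero fun ij hij => ?_
  obtain hm | hn : m ≤ ij.1 ∨ n ≤ ij.2 := by rw [HasAntidiagonal.mem_antidiagonal] at hij; lia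
  · rw [Module.End.pow_map_zero_of_le hm ha, zero_mul, smul_zero]
  · rw [Module.End.pow_map_zero_of_le hn hb, mul_zero, smul_zero]

end Leibniz

section EngelSubalgebra

variable (R : Type*) {A : Type*} [CommRing R] [Ring A] [Algebra R A]

theorem ad_apply_mul (x a b : A) : ad R A x (a * b) = ad R A x a * b + a * ad R A x b := by
  simp only [ad_apply, Ring.lie_def]
  noncomm_ring

/-- The elements of an associative algebra annihilated by some power of `ad x`. As a submodule this
is Mathlib's `LieSubalgebra.engel R x`; here it is an associative unital subalgebra. -/
def engelSubalgebra (x : A) : Subalgebra R A :=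
  { LieSubalgebra.engel R x with
    mul_mem' := by
      intro a b ha hb
      obtain ⟨m, hm⟩ := (LieSubalgebra.mem_engel_iff R x a).1 ha
      obtain ⟨n, hn⟩ := (LieSubalgebra.mem_engel_iff R x b).1 hb
      exact (LieSubalgebra.mem_engel_iff R x (a * b)).2
        ⟨m + n, pow_add_apply_mul_eq_zero_of_leibniz (ad_apply_mul R x) hm hn⟩
    algebraMap_mem' := fun r => (LieSubalgebra.mem_engel_iff R x _).2
      ⟨1, by rw [pow_one, ad_apply, (Algebra.commute_algebraMap_right r x).lie_eq]⟩ }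

variable {R} {x a : A}

theorem mem_engelSubalgebra_iff : a ∈ engelSubalgebra R x ↔ ∃ n : ℕ, (ad R A x ^ n) a = 0 :=
  LieSubalgebra.mem_engel_iff R x a

theorem mem_engelSubalgebra_of_lie_mem (h : ⁅x, a⁆ ∈ engelSubalgebra R x) :
    a ∈ engelSubalgebra R x := by
  obtain ⟨n, hn⟩ := mem_engelSubalgebra_iff.1 h
  exact mem_engelSubalgebra_iff.2 ⟨n + 1, by rwa [pow_succ, Module.End.mul_apply, ad_apply]⟩

theorem mem_engelSubalgebra_of_commute (h : Commute x a) : a ∈ engelSubalgebra R x :=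
  mem_engelSubalgebra_of_lie_mem (h.lie_eq ▸ zero_mem _)

end EngelSubalgebra

section JordanDouble

variable (K : Type) [Field K]

theorem Dmk_eq_of_JRel {a b : FreeAlgebra K JGen} (h : JRel K a b) : Dmk K a = Dmk K b :=
  RingQuot.mkAlgHom_rel K h

theorem adjoin_range_Dmk_ι : Algebra.adjoin K (Set.range (Dmk K ∘ ι K)) = ⊤ := by
  rw [Set.range_comp, ← AlgHom.map_adjoin, adjoin_range_ι, Algebra.map_top]
  exact AlgHom.range_eq_top _ |>.2 (RingQuot.mkAlgHom_surjective K (JRel K))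

theorem commute_DX_DU : Commute (DX K) (DU K) := by
  simpa only [commute_iff_eq, DX, DU, map_mul] using (Dmk_eq_of_JRel K .ux).symm

theorem commute_DX_DG : Commute (DX K) (DG K) := by
  simpa only [commute_iff_eq, DX, DG, map_mul] using (Dmk_eq_of_JRel K .gx).symm

theorem DG_mul_DGinv : DG K * DGinv K = 1 := by
  simpa only [DG, DGinv, map_mul, map_one] using Dmk_eq_of_JRel K .gginv

theorem DGinv_mul_DG : DGinv K * DG K = 1 := by
  simpa only [DG, DGinv, map_mul, map_one] using Dmk_eq_of_JRel K .ginvg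

theorem commute_DX_DGinv : Commute (DX K) (DGinv K) :=
  (show Commute (DX K) (Units.mk (DG K) (DGinv K) (DG_mul_DGinv K) (DGinv_mul_DG K)) from
    commute_DX_DG K).units_inv_right

theorem lie_DX_DZ : ⁅DX K, DZ K⁆ = -DX K := by
  have hzx : DZ K * DX K = DX K * DZ K + DX K := by
    simpa only [DX, DZ, map_mul, map_add] using Dmk_eq_of_JRel K .zx
  rw [Ring.lie_def, hzx]
  abel

theorem lie_DX_DY : ⁅DX K, DY K⁆ = (1 / 2 : K) • (DX K * DX K) := by
  have hyx : DY K * DX K = DX K * DY K - (1 / 2 : K) • (DX K * DX K) := by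
    simpa only [DX, DY, map_mul, map_sub, map_smul] using Dmk_eq_of_JRel K .yx
  rw [Ring.lie_def, hyx]
  abel

theorem lie_DX_DV : ⁅DX K, DV K⁆ = DG K - 1 - DX K * DU K := by
  have hvx : DV K * DX K = DX K * DV K + (1 - DG K) + DX K * DU K := by
    simpa only [DX, DU, DV, DG, map_mul, map_add, map_sub, map_one] using Dmk_eq_of_JRel K .vx
  rw [Ring.lie_def, hvx]
  abel

theorem Dmk_ι_mem_engelSubalgebra_DX (i : JGen) : Dmk K (ι K i) ∈ engelSubalgebra K (DX K) := by
  have hx : DX K ∈ engelSubalgebra K (DX K) := mem_engelSubalgebra_of_commute (.refl _)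
  have hu : DU K ∈ engelSubalgebra K (DX K) := mem_engelSubalgebra_of_commute (commute_DX_DU K)
  have hg : DG K ∈ engelSubalgebra K (DX K) := mem_engelSubalgebra_of_commute (commute_DX_DG K)
  cases i with
  | x => exact hx
  | u => exact hu
  | g => exact hg
  | ginv => exact mem_engelSubalgebra_of_commute (commute_DX_DGinv K)
  | zeta =>
    refine mem_engelSubalgebra_of_lie_mem (a := DZ K) ?_
    rw [lie_DX_DZ]
    exact neg_mem hx
  | y =>
    refine mem_engelSubalgebra_of_lie_mem (a := DY K) ?_
    rw [lie_DX_DY]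
    exact Subalgebra.smul_mem _ (mul_mem hx hx) _
  | v =>
    refine mem_engelSubalgebra_of_lie_mem (a := DV K) ?_
    rw [lie_DX_DV]
    exact sub_mem (sub_mem hg (one_mem _)) (mul_mem hx hu)

theorem engelSubalgebra_DX_eq_top : engelSubalgebra K (DX K) = ⊤ := by
  rw [eq_top_iff, ← adjoin_range_Dmk_ι, Algebra.adjoin_le_iff]
  exact Set.range_subset_iff.2 (Dmk_ι_mem_engelSubalgebra_DX K)

theorem x_ad_locally_nilpotent_general (a : D K) :
    ∃ n : ℕ, (fun b : D K => DX K * b - b * DX K)^[n] a = 0 := by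
  have ha : a ∈ engelSubalgebra K (DX K) := engelSubalgebra_DX_eq_top K ▸ Algebra.mem_top
  obtain ⟨n, hn⟩ := mem_engelSubalgebra_iff.1 ha
  exact ⟨n, by rwa [Module.End.pow_apply] at hn⟩

end JordanDouble

/-- `x` is ad-locally nilpotent in `D`: for every `a ∈ D` there is `n ∈ ℕ` with
`(ad x)^n(a) = 0`, where `(ad x)(b) = xb - bx`. -/
theorem x_ad_locally_nilpotent (a : D k) :
    ∃ n : ℕ, (fun b : D k => DX k * b - b * DX k)^[n] a = 0 := by
  exact x_ad_locally_nilpotent_general k a
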